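/- arXiv:2210.13933 — 2 statements merged into one kernel-verified Lean document; each statement's English description precedes it below -/
import Mathlib

section
/- Let p_1, …, p_m and q_1, …, q_l be univariate real polynomials such that each p_i is squarefree and, for every pair i ≠ j, p_i and p_j have no common complex root. Let S = {t ∈ ℝ : p_1(t) ≥ 0, …, p_m(t) ≥ 0, q_1(t) = ⋯ = q_l(t) = 0}. Then: (a) if some q_j is not the zero polynomial, S is a finite set; and (b) if every q_j is the zero polynomial (in particular if l = 0), then S has no isolated points, and for every point a in the frontier of S there exists i ∈ {1, …, m} such that (t − a) divides p_i but (t − a)² does not divide p_i. -/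
open Polynomial

/-- A real univariate polynomial has only simple (complex) roots: it is nonzero and
every complex root has multiplicity at most one. -/
def HasOnlySimpleComplexRoots (p : Polynomial ℝ) : Prop :=
  p ≠ 0 ∧ ∀ a : ℂ, (p.map (algebraMap ℝ ℂ)).rootMultiplicity a ≤ 1

/-- Two real univariate polynomials have a common complex root. -/
def HasCommonComplexRoot (p q : Polynomial ℝ) : Prop :=
  ∃ a : ℂ, Polynomial.aeval a p = 0 ∧ Polynomial.aeval a q = 0

/-!
A continuous function that is positive at a point is positive nearby, so the only points of
`{t | ∀ i, 0 ≤ pᵢ(t)}` that could be isolated or on the frontier are roots of some `pᵢ`. At such a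
point `a` all other `pⱼ` are positive, hence stay positive nearby, while `pᵢ = (t - a) r` with
`r(a) ≠ 0` changes sign: it is positive on one side of `a`, and the set accumulates at `a` from
that side.
-/

section NonnegLocus

open Filter Topology

/-- The basic closed set `{t | ∀ i, 0 ≤ pᵢ(t)}` cut out by a family of univariate polynomials. -/
def nonnegLocus {R ι : Type*} [Semiring R] [LE R] (p : ι → R[X]) : Set R :=
  {t | ∀ i, 0 ≤ (p i).eval t}

section Topology

variable {R ι : Type*} [Semiring R] [LinearOrder R] [TopologicalSpace R] [IsTopologicalSemiring R]
  [OrderClosedTopology R]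

theorem eventually_eval_pos {p : R[X]} {a : R} (ha : 0 < p.eval a) :
    ∀ᶠ t in 𝓝 a, 0 < p.eval t :=
  p.continuous.continuousAt.eventually_const_lt ha

theorem isClosed_nonnegLocus (p : ι → R[X]) : IsClosed (nonnegLocus p) := by
  rw [nonnegLocus, Set.ofPred_forall]
  exact isClosed_iInter fun i => isClosed_le continuous_const (p i).continuous

theorem nonnegLocus_mem_nhds [Finite ι] {p : ι → R[X]} {a : R} (ha : ∀ i, 0 < (p i).eval a) :
    nonnegLocus p ∈ 𝓝 a :=
  (eventually_all.2 fun i => eventually_eval_pos (ha i)).mono fun _ ht i => (ht i).le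

theorem exists_isRoot_of_mem_nonnegLocus_of_notMem_nhds [Finite ι] {p : ι → R[X]} {a : R}
    (ha : a ∈ nonnegLocus p) (hnhds : nonnegLocus p ∉ 𝓝 a) : ∃ i, (p i).IsRoot a := by
  by_contra! hroot
  exact hnhds (nonnegLocus_mem_nhds fun i => (ha i).lt_of_ne' (hroot i))

theorem exists_isRoot_of_mem_frontier_nonnegLocus [Finite ι] {p : ι → R[X]} {a : R}
    (ha : a ∈ frontier (nonnegLocus p)) : ∃ i, (p i).IsRoot a :=
  exists_isRoot_of_mem_nonnegLocus_of_notMem_nhds ((isClosed_nonnegLocus p).frontier_subset ha)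
    fun hnhds => ha.2 (mem_interior_iff_mem_nhds.2 hnhds)

end Topology

section Order

variable {R ι κ : Type*} [CommRing R] [LinearOrder R] [IsStrictOrderedRing R] [DenselyOrdered R]
  [TopologicalSpace R] [IsTopologicalRing R] [OrderTopology R]

theorem frequently_eval_pos_of_isRoot_of_not_sq_dvd {p : R[X]} {a : R} (ha : p.IsRoot a)
    (hsq : ¬ (X - C a) ^ 2 ∣ p) : ∃ᶠ t in 𝓝[≠] a, 0 < p.eval t := by
  obtain ⟨r, rfl⟩ := dvd_iff_isRoot.2 ha
  have hra : r.eval a ≠ 0 := fun h =>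
    hsq (sq (X - C a) ▸ mul_dvd_mul_left _ (dvd_iff_isRoot.2 h))
  simp only [eval_mul, eval_sub, eval_X, eval_C]
  rcases hra.lt_or_gt with hneg | hpos
  · have hr : ∀ᶠ t in 𝓝 a, r.eval t < 0 := r.continuous.continuousAt.eventually_lt_const hneg
    have hleft : ∀ᶠ t in 𝓝[<] a, 0 < (t - a) * r.eval t := by
      filter_upwards [nhdsWithin_le_nhds hr, self_mem_nhdsWithin] with t hrt hta
      exact mul_pos_of_neg_of_neg (sub_neg.2 hta) hrt
    exact hleft.frequently.filter_mono (nhdsLT_le_nhdsNE a)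
  · have hright : ∀ᶠ t in 𝓝[>] a, 0 < (t - a) * r.eval t := by
      filter_upwards [nhdsWithin_le_nhds (eventually_eval_pos hpos), self_mem_nhdsWithin]
        with t hrt hta
      exact mul_pos (sub_pos.2 hta) hrt
    exact hright.frequently.filter_mono (nhdsGT_le_nhdsNE a)

theorem preperfect_nonnegLocus [Finite ι] {p : ι → R[X]}
    (hsq : ∀ i a, ¬ (X - C a) ^ 2 ∣ p i)
    (hroot : ∀ i j, i ≠ j → ∀ a, (p i).IsRoot a → ¬ (p j).IsRoot a) :
    Preperfect (nonnegLocus p) := by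
  intro a ha
  rw [accPt_iff_frequently_nhdsNE]
  by_cases hnhds : nonnegLocus p ∈ 𝓝 a
  · exact Eventually.frequently (nhdsWithin_le_nhds hnhds)
  · obtain ⟨i, hi⟩ := exists_isRoot_of_mem_nonnegLocus_of_notMem_nhds ha hnhds
    have hothers : ∀ᶠ t in 𝓝 a, ∀ j, j ≠ i → 0 < (p j).eval t :=
      eventually_all.2 fun j => eventually_imp_distrib_left.2 fun hji =>
        eventually_eval_pos ((ha j).lt_of_ne' (hroot i j hji.symm a hi))
    refine ((frequently_eval_pos_of_isRoot_of_not_sq_dvd hi (hsq i a)).and_eventually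
      (nhdsWithin_le_nhds hothers)).mono ?_
    rintro t ⟨hit, hjt⟩ j
    obtain rfl | hji := eq_or_ne j i
    exacts [hit.le, (hjt j hji).le]

theorem finite_or_no_isolated_points_general [Finite ι] (p : ι → R[X]) (q : κ → R[X])
    (hsq : ∀ i a, ¬ (X - C a) ^ 2 ∣ p i)
    (hroot : ∀ i j, i ≠ j → ∀ a, (p i).IsRoot a → ¬ (p j).IsRoot a)
    (S : Set R) (hS : S = {t | (∀ i, 0 ≤ (p i).eval t) ∧ ∀ j, (q j).eval t = 0}) :
    ((∃ j, q j ≠ 0) → S.Finite) ∧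
    ((∀ j, q j = 0) →
      (∀ a ∈ S, a ∈ closure (S \ {a})) ∧
      ∀ a ∈ frontier S, ∃ i, (X - C a) ∣ p i ∧ ¬ (X - C a) ^ 2 ∣ p i) := by
  constructor
  · rintro ⟨j, hj⟩
    rw [hS]
    exact (finite_setOfPred_isRoot hj).subset fun t ht => ht.2 j
  · intro hq
    obtain rfl : S = nonnegLocus p := by
      simp only [hS, hq, eval_zero, implies_true, and_true, nonnegLocus]
    refine ⟨fun a ha => ?_, fun a ha => ?_⟩
    · exact mem_closure_iff_clusterPt.2
        (accPt_principal_iff_clusterPt.1 (preperfect_nonnegLocus hsq hroot a ha))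
    · obtain ⟨i, hi⟩ := exists_isRoot_of_mem_frontier_nonnegLocus ha
      exact ⟨i, dvd_iff_isRoot.2 hi, hsq i a⟩

end Order

end NonnegLocus

theorem HasOnlySimpleComplexRoots.not_X_sub_C_sq_dvd {p : ℝ[X]}
    (hp : HasOnlySimpleComplexRoots p) (a : ℝ) : ¬ (X - C a) ^ 2 ∣ p := by
  intro hdvd
  have hmap : (X - C (algebraMap ℝ ℂ a)) ^ 2 ∣ p.map (algebraMap ℝ ℂ) := by
    simpa only [Polynomial.map_pow, Polynomial.map_sub, map_X, map_C] using
      Polynomial.map_dvd (algebraMap ℝ ℂ) hdvd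
  have hmult := (le_rootMultiplicity_iff (map_ne_zero hp.1)).2 hmap
  exact absurd (hmult.trans (hp.2 a)) (by decide)

theorem HasCommonComplexRoot.of_isRoot {p q : ℝ[X]} {a : ℝ} (hp : p.IsRoot a) (hq : q.IsRoot a) :
    HasCommonComplexRoot p q := by
  refine ⟨algebraMap ℝ ℂ a, ?_, ?_⟩
  · rw [aeval_algebraMap_apply_eq_algebraMap_eval, hp.eq_zero, map_zero]
  · rw [aeval_algebraMap_apply_eq_algebraMap_eval, hq.eq_zero, map_zero]

/-- Let `S = {t : p₁(t) ≥ 0, …, pₘ(t) ≥ 0, q₁(t) = ⋯ = q_l(t) = 0}`,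
where each `pᵢ` is squarefree and no two of the `pᵢ` have a common complex root.
(a) If some `q_j` is nonzero then `S` is finite.
(b) If every `q_j` is the zero polynomial then `S` has no isolated points, and every
point `a` of the frontier of `S` is a simple real root of some `pᵢ`
(`(t - a) ∣ pᵢ` but `(t - a)² ∤ pᵢ`). -/
theorem finite_or_no_isolated_points
    (m l : ℕ) (p : Fin m → Polynomial ℝ) (q : Fin l → Polynomial ℝ)
    (hp : ∀ i, HasOnlySimpleComplexRoots (p i))
    (hnc : ∀ i j, i ≠ j → ¬ HasCommonComplexRoot (p i) (p j))
    (S : Set ℝ)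
    (hS : S = {t | (∀ i, 0 ≤ (p i).eval t) ∧ ∀ j, (q j).eval t = 0}) :
    ((∃ j, q j ≠ 0) → S.Finite) ∧
    ((∀ j, q j = 0) →
      (∀ a ∈ S, a ∈ closure (S \ {a})) ∧
      ∀ a ∈ frontier S, ∃ i,
        (Polynomial.X - Polynomial.C a) ∣ p i ∧
        ¬ (Polynomial.X - Polynomial.C a) ^ 2 ∣ p i) :=
  finite_or_no_isolated_points_general p q (fun i => (hp i).not_X_sub_C_sq_dvd)
    (fun i j hij _ hi hj => hnc i j hij (.of_isRoot hi hj)) S hS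
end

section
/- Let n, N ∈ ℕ, let f be a real polynomial in n variables, and let S = ⋃_{u=1}^{N} {x ∈ ℝⁿ : P_{i,u}(x) > 0 for all i, and Q_{k,u}(x) = 0 for all k} for real polynomials P_{i,u}, Q_{k,u} in n variables. Assume that the image f(S) is nonempty and bounded, and set f⋆ = inf{f(x) : x ∈ S}. Then there exist w ∈ ℕ and, for each j = 1, …, w, finite families of univariate real polynomials p^{(j)} = (p_{1,j}, …, p_{m_j,j}) and q^{(j)} = (q_{1,j}, …, q_{l_j,j}), with each p_{i,j} squarefree and any two distinct polynomials among p_{1,j}, …, p_{m_j,j} having no common complex root, such that ⋃_{j=1}^{w} S(p^{(j)}, q^{(j)}) is the closure of f(S), and there exists K ∈ ℕ such that for every k ≥ K, f⋆ = min_{j = 1, …, w} ρ_k(g, p^{(j)}, q^{(j)}), where g is the identity polynomial g(t) = t and ρ_k(g, p^{(j)}, q^{(j)}) = sup{λ ∈ ℝ : g − λ ∈ T_k(p^{(j)}, q^{(j)})}. -/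
open Polynomial

/-- A univariate real polynomial is a (finite) sum of squares of real polynomials. -/
def IsSumOfSquaresPoly (σ : Polynomial ℝ) : Prop :=
  ∃ (r : ℕ) (h : Fin r → Polynomial ℝ), σ = ∑ i, (h i) ^ 2

/-- Membership in the truncated preordering `T_k(p, q)`: `f` can be written as
`Σ_{α ∈ {0,1}^m} σ_α p₁^{α₁} ⋯ pₘ^{αₘ} + Σ_j ψ_j q_j` with each `σ_α` a sum of
squares, `deg(σ_α p^α) ≤ 2k` and `deg(ψ_j q_j) ≤ 2k`. -/
def MemTrunc {m l : ℕ} (k : ℕ) (p : Fin m → Polynomial ℝ) (q : Fin l → Polynomial ℝ)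
    (f : Polynomial ℝ) : Prop :=
  ∃ (σ : (Fin m → Bool) → Polynomial ℝ) (ψ : Fin l → Polynomial ℝ),
    (∀ α, IsSumOfSquaresPoly (σ α)) ∧
    (∀ α, (σ α * ∏ i, if α i then p i else 1).degree ≤ (2 * k : ℕ)) ∧
    (∀ j, (ψ j * q j).degree ≤ (2 * k : ℕ)) ∧
    f = (∑ α, σ α * ∏ i, if α i then p i else 1) + ∑ j, ψ j * q j

/-!
The image `f(S)` is a semialgebraic subset of the line, so its closure is a finite union of compact
intervals `[a, b]`. Describe such an interval by `X - a ≥ 0` and `b - X ≥ 0`, or by `X - a = 0` when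
`a = b`: then `X - a` is itself one of the given polynomials, hence lies in `T_k` for all `k ≥ 1`,
while `X - λ` with `λ > a` is negative at `a`. So `ρ_k = a`, and the least left endpoint is `f⋆`.

That `f(S)` is semialgebraic is proved by eliminating one variable at a time in the manner of Cohen
and Hörmander. The joint sign pattern on the line of finitely many polynomials `p_s(y)` depending on
parameters `s` is determined, up to an increasing reparametrization of the line, by the signs at `s`
of finitely many polynomials in `s`: by induction on the degree, the sign patterns of the derivative
of `p_s`, of the other polynomials, and of the remainders of `p_s` modulo all of these are already
controlled; the remainders give the sign of `p_s` at the zeros of the others, and `p_s` is strictly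
monotone between zeros of its derivative. Points of the parameter space with the same signs
therefore have fibres with the same sign patterns.
-/

open SignType (sign)

theorem sign_eq_of_isPreconnected {X : Type*} [TopologicalSpace X] {s : Set X} {f : X → ℝ}
    (hs : IsPreconnected s) (hf : ContinuousOn f s) (h0 : ∀ c ∈ s, f c ≠ 0) {x y : X}
    (hx : x ∈ s) (hy : y ∈ s) : sign (f x) = sign (f y) := by
  rcases (h0 x hx).lt_or_gt with hfx | hfx <;> rcases (h0 y hy).lt_or_gt with hfy | hfy
  · rw [sign_neg hfx, sign_neg hfy]
  · obtain ⟨c, hc, hfc⟩ := hs.intermediate_value hx hy hf ⟨hfx.le, hfy.le⟩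
    exact absurd hfc (h0 c hc)
  · obtain ⟨c, hc, hfc⟩ := hs.intermediate_value hy hx hf ⟨hfy.le, hfx.le⟩
    exact absurd hfc (h0 c hc)
  · rw [sign_pos hfx, sign_pos hfy]

theorem eq_zero_iff_of_sign_eq {x y : ℝ} (h : sign x = sign y) : x = 0 ↔ y = 0 := by
  rw [← sign_eq_zero_iff, h, sign_eq_zero_iff]

section OrderIso

variable {K : Type*} [Field K] [LinearOrder K] [IsStrictOrderedRing K]

theorem exists_orderIso_apply_eq_of_lt {c x y : K} (hx : c < x) (hy : c < y) :
    ∃ g : K ≃o K, g x = y ∧ ∀ z ≤ c, g z = z := by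
  let stretch (r z : K) : K := if z ≤ c then z else c + r * (z - c)
  have lt_stretch {r z : K} (hr : 0 < r) (hz : c < z) : c < c + r * (z - c) :=
    lt_add_of_pos_right c (mul_pos hr (sub_pos.2 hz))
  have strictMono {r : K} (hr : 0 < r) : StrictMono (stretch r) := by
    intro z w hzw
    simp only [stretch]
    split_ifs with hz hw hw
    · exact hzw
    · exact hz.trans_lt (lt_stretch hr (not_le.1 hw))
    · exact absurd (hzw.le.trans hw) hz
    · gcongr
  set r := (y - c) / (x - c)
  have hr : 0 < r := div_pos (sub_pos.2 hy) (sub_pos.2 hx)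
  have rightInverse : Function.RightInverse (stretch r⁻¹) (stretch r) := by
    intro z
    simp only [stretch]
    split_ifs with hz hz'
    · rfl
    · exact absurd hz' (lt_stretch (inv_pos.2 hr) (not_le.1 hz)).not_ge
    · field_simp
      ring
  refine ⟨(strictMono hr).orderIsoOfRightInverse _ _ rightInverse, ?_, fun z hz => if_pos hz⟩
  have hxc : x - c ≠ 0 := (sub_pos.2 hx).ne'
  simp [stretch, hx.not_ge, r, div_mul_cancel₀ _ hxc]

theorem exists_orderIso_eqOn {s : Finset K} {f : K → K} (hf : StrictMonoOn f s) :
    ∃ g : K ≃o K, Set.EqOn g f s := by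
  induction s using Finset.induction_on_max with
  | empty => exact ⟨OrderIso.refl K, by simp⟩
  | insert x s hx ih =>
    obtain ⟨g, hg⟩ := ih (hf.mono (by simp))
    have f_lt (z : K) (hz : z ∈ s) : f z < f x := hf (by simp [hz]) (by simp) (hx z hz)
    have lt_targets : ∀ z ∈ s.image f, ∀ w ∈ ({g x, f x} : Finset K), z < w := by
      intro z hz w hw
      obtain ⟨z', hz', rfl⟩ := Finset.mem_image.1 hz
      rcases Finset.mem_insert.1 hw with rfl | hw
      · exact hg hz' ▸ g.strictMono (hx z' hz')
      · exact Finset.mem_singleton.1 hw ▸ f_lt z' hz'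
    obtain ⟨c, hc, hc'⟩ := Order.exists_between_finsets _ _ lt_targets
    obtain ⟨k, hkx, hk⟩ :=
      exists_orderIso_apply_eq_of_lt (hc' (g x) (by simp)) (hc' (f x) (by simp))
    refine ⟨g.trans k, fun z hz => ?_⟩
    rcases Finset.mem_insert.1 hz with rfl | hz
    · exact hkx
    · rw [OrderIso.trans_apply, hg hz, hk _ (hc _ (Finset.mem_image_of_mem f hz)).le]

end OrderIso

theorem exists_mem_Ioo_disjoint {α : Type*} [LinearOrder α] {F : Set α} (hF : F.Finite) {y : α}
    (hy : y ∈ (upperClosure F : Set α) ∩ lowerClosure F) (hyF : y ∉ F) :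
    ∃ a ∈ F, ∃ b ∈ F, y ∈ Set.Ioo a b ∧ Disjoint (Set.Ioo a b) F := by
  obtain ⟨⟨lo, hlo, hlo_le⟩, hi, hhi, hle_hi⟩ := hy
  obtain ⟨a, ⟨haF, hay⟩, ha⟩ := Set.exists_max_image {c ∈ F | c ≤ y} id (hF.sep _) ⟨lo, hlo, hlo_le⟩
  obtain ⟨b, ⟨hbF, hyb⟩, hb⟩ := Set.exists_min_image {c ∈ F | y ≤ c} id (hF.sep _) ⟨hi, hhi, hle_hi⟩
  have ne_y {c : α} (hc : c ∈ F) : c ≠ y := ne_of_mem_of_not_mem hc hyF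
  refine ⟨a, haF, b, hbF, ⟨hay.lt_of_ne (ne_y haF), hyb.lt_of_ne (ne_y hbF).symm⟩,
    Set.disjoint_left.2 fun c ⟨hac, hcb⟩ hcF => ?_⟩
  rcases le_total c y with hcy | hyc
  · exact (ha c ⟨hcF, hcy⟩).not_gt hac
  · exact (hb c ⟨hcF, hyc⟩).not_gt hcb

section SameStrictMonotonicityOn

variable {u v : ℝ → ℝ} {a b : ℝ}

/-- On `s`, the functions `u` and `v` are both strictly increasing or both strictly decreasing.
This is what equal signs of two derivatives give between consecutive critical points. -/
def SameStrictMonotonicityOn (u v : ℝ → ℝ) (s : Set ℝ) : Prop :=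
  (StrictMonoOn u s ∧ StrictMonoOn v s) ∨ (StrictAntiOn u s ∧ StrictAntiOn v s)

theorem SameStrictMonotonicityOn.injOn_left {s : Set ℝ} (h : SameStrictMonotonicityOn u v s) :
    Set.InjOn u s :=
  h.elim (fun h => h.1.injOn) fun h => h.1.injOn

theorem SameStrictMonotonicityOn.comp_orderIso {s : Set ℝ} (h : SameStrictMonotonicityOn u v s)
    (g : ℝ ≃o ℝ) (hg : Set.MapsTo g s s) : SameStrictMonotonicityOn u (v ∘ g) s :=
  h.imp (And.imp_right fun hv => hv.comp (g.strictMono.strictMonoOn s) hg)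
    (And.imp_right fun hv => hv.comp_strictMonoOn (g.strictMono.strictMonoOn s) hg)

theorem exists_zero_of_strictMonoOn {z : ℝ} (hu : StrictMonoOn u (Set.Icc a b))
    (hv : ContinuousOn v (Set.Icc a b)) (ha : sign (u a) = sign (v a))
    (hb : sign (u b) = sign (v b)) (hz : z ∈ Set.Ioo a b) (huz : u z = 0) :
    ∃ z' ∈ Set.Ioo a b, v z' = 0 := by
  have hab : a < b := hz.1.trans hz.2
  have hzI : z ∈ Set.Icc a b := Set.Ioo_subset_Icc_self hz
  have hua : u a < 0 := huz ▸ hu (Set.left_mem_Icc.2 hab.le) hzI hz.1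
  have hub : 0 < u b := huz ▸ hu hzI (Set.right_mem_Icc.2 hab.le) hz.2
  have hva : v a < 0 := sign_eq_neg_one_iff.1 (ha ▸ sign_neg hua)
  have hvb : 0 < v b := sign_eq_one_iff.1 (hb ▸ sign_pos hub)
  exact intermediate_value_Ioo hab.le hv ⟨hva, hvb⟩

theorem SameStrictMonotonicityOn.exists_zero {z : ℝ}
    (h : SameStrictMonotonicityOn u v (Set.Icc a b))
    (hv : ContinuousOn v (Set.Icc a b)) (ha : sign (u a) = sign (v a))
    (hb : sign (u b) = sign (v b)) (hz : z ∈ Set.Ioo a b) (huz : u z = 0) :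
    ∃ z' ∈ Set.Ioo a b, v z' = 0 := by
  rcases h with ⟨hu, -⟩ | ⟨hu, -⟩
  · exact exists_zero_of_strictMonoOn hu hv ha hb hz huz
  · simpa using exists_zero_of_strictMonoOn (u := -u) hu.neg hv.neg
      (by simp [Left.sign_neg, ha]) (by simp [Left.sign_neg, hb]) hz (by simp [huz])

theorem sign_eq_of_strictMonoOn {y : ℝ} (hu : ContinuousOn u (Set.Icc a b))
    (hv : StrictMonoOn v (Set.Icc a b)) (ha : sign (u a) = sign (v a))
    (hb : sign (u b) = sign (v b)) (h0 : ∀ z ∈ Set.Ioo a b, u z = 0 → v z = 0)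
    (hy : y ∈ Set.Ioo a b) : sign (u y) = sign (v y) := by
  have hyI : y ∈ Set.Icc a b := Set.Ioo_subset_Icc_self hy
  have haI : a ∈ Set.Icc a b := Set.left_mem_Icc.2 (hy.1.trans hy.2).le
  have hbI : b ∈ Set.Icc a b := Set.right_mem_Icc.2 (hy.1.trans hy.2).le
  rcases lt_trichotomy (u y) 0 with huy | huy | huy
  · obtain ⟨z, hzI, hyz, hvz⟩ : ∃ z ∈ Set.Icc a b, y < z ∧ v z ≤ 0 := by
      rcases le_or_gt (u b) 0 with hub | hub
      · exact ⟨b, hbI, hy.2, sign_nonpos_iff.1 (hb ▸ sign_nonpos_iff.2 hub)⟩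
      · obtain ⟨z, hz, huz⟩ := intermediate_value_Ioo hy.2.le
          (hu.mono (Set.Icc_subset_Icc_left hy.1.le)) ⟨huy, hub⟩
        have hzab : z ∈ Set.Ioo a b := ⟨hy.1.trans hz.1, hz.2⟩
        exact ⟨z, Set.Ioo_subset_Icc_self hzab, hz.1, (h0 z hzab huz).le⟩
    rw [sign_neg huy, sign_neg ((hv hyI hzI hyz).trans_le hvz)]
  · rw [huy, h0 y hy huy]
  · obtain ⟨z, hzI, hzy, hvz⟩ : ∃ z ∈ Set.Icc a b, z < y ∧ 0 ≤ v z := by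
      rcases le_or_gt 0 (u a) with hua | hua
      · exact ⟨a, haI, hy.1, sign_nonneg_iff.1 (ha ▸ sign_nonneg_iff.2 hua)⟩
      · obtain ⟨z, hz, huz⟩ := intermediate_value_Ioo hy.1.le
          (hu.mono (Set.Icc_subset_Icc_right hy.2.le)) ⟨hua, huy⟩
        have hzab : z ∈ Set.Ioo a b := ⟨hz.1, hz.2.trans hy.2⟩
        exact ⟨z, Set.Ioo_subset_Icc_self hzab, hz.2, (h0 z hzab huz).ge⟩
    rw [sign_pos huy, sign_pos (hvz.trans_lt (hv hzI hyI hzy))]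

theorem SameStrictMonotonicityOn.sign_eq {y : ℝ} (h : SameStrictMonotonicityOn u v (Set.Icc a b))
    (hu : ContinuousOn u (Set.Icc a b)) (ha : sign (u a) = sign (v a))
    (hb : sign (u b) = sign (v b)) (h0 : ∀ z ∈ Set.Ioo a b, u z = 0 → v z = 0)
    (hy : y ∈ Set.Ioo a b) : sign (u y) = sign (v y) := by
  rcases h with ⟨-, hv⟩ | ⟨-, hv⟩
  · exact sign_eq_of_strictMonoOn hu hv ha hb h0 hy
  · have := sign_eq_of_strictMonoOn hu.neg hv.neg (by simp [Left.sign_neg, ha])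
      (by simp [Left.sign_neg, hb]) (by simpa using h0) hy
    simpa [Left.sign_neg] using this

end SameStrictMonotonicityOn

section Alignment

variable {u v : ℝ → ℝ} {F : Set ℝ}

theorem exists_cmp_eq_and_sign_eq (hv : Continuous v) (hF : F.Finite)
    (hsign : ∀ c ∈ F, sign (u c) = sign (v c))
    (hmono : ∀ a b, Disjoint (Set.Ioo a b) F → SameStrictMonotonicityOn u v (Set.Icc a b)) {z : ℝ}
    (hz : z ∈ F ∪ {z ∈ (upperClosure F : Set ℝ) ∩ lowerClosure F | u z = 0}) :
    ∃ z', (∀ c ∈ F, cmp z' c = cmp z c) ∧ sign (u z) = sign (v z') := by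
  by_cases hzF : z ∈ F
  · exact ⟨z, fun _ _ => rfl, hsign z hzF⟩
  obtain ⟨hz, huz⟩ := hz.resolve_left hzF
  obtain ⟨a, haF, b, hbF, hzab, hab⟩ := exists_mem_Ioo_disjoint hF hz hzF
  obtain ⟨z', hz', hvz'⟩ := (hmono a b hab).exists_zero hv.continuousOn (hsign a haF)
    (hsign b hbF) hzab huz
  refine ⟨z', fun c hc => ?_, by rw [huz, hvz']⟩
  rcases le_or_gt c a with hca | hac
  · rw [cmp_eq_gt_iff _ _ |>.2 (hca.trans_lt hz'.1), cmp_eq_gt_iff _ _ |>.2 (hca.trans_lt hzab.1)]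
  · have hbc : b ≤ c := not_lt.1 fun hcb => Set.disjoint_left.1 hab ⟨hac, hcb⟩ hc
    rw [cmp_eq_lt_iff _ _ |>.2 (hz'.2.trans_le hbc), cmp_eq_lt_iff _ _ |>.2 (hzab.2.trans_le hbc)]

theorem exists_mem_Icc_of_lt
    (hinj : ∀ a b, Disjoint (Set.Ioo a b) F → Set.InjOn u (Set.Icc a b)) {x y : ℝ}
    (hx : x ∈ F ∪ {z | u z = 0}) (hy : y ∈ F ∪ {z | u z = 0}) (hxy : x < y) :
    ∃ c ∈ F, c ∈ Set.Icc x y := by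
  by_contra! hF
  have hux : u x = 0 := hx.resolve_left fun hxF => hF x hxF (Set.left_mem_Icc.2 hxy.le)
  have huy : u y = 0 := hy.resolve_left fun hyF => hF y hyF (Set.right_mem_Icc.2 hxy.le)
  have hdisj : Disjoint (Set.Ioo x y) F :=
    Set.disjoint_left.2 fun c hc hcF => hF c hcF (Set.Ioo_subset_Icc_self hc)
  exact hxy.ne (hinj x y hdisj (Set.left_mem_Icc.2 hxy.le) (Set.right_mem_Icc.2 hxy.le)
    (hux.trans huy.symm))

theorem exists_orderIso_sign_eq (hu : Continuous u) (hv : Continuous v) (hF : F.Finite)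
    (hzeros : {z | u z = 0}.Finite) (hsign : ∀ c ∈ F, sign (u c) = sign (v c))
    (hmono : ∀ a b, Disjoint (Set.Ioo a b) F → SameStrictMonotonicityOn u v (Set.Icc a b)) :
    ∃ g : ℝ ≃o ℝ, (∀ c ∈ F, g c = c) ∧
      ∀ y ∈ (upperClosure F : Set ℝ) ∩ lowerClosure F, sign (u y) = sign (v (g y)) := by
  set Z := F ∪ {z ∈ (upperClosure F : Set ℝ) ∩ lowerClosure F | u z = 0}
  have hZfin : Z.Finite := hF.union (hzeros.subset fun z hz => hz.2)
  have hZF : Z ⊆ F ∪ {z | u z = 0} := Set.union_subset_union_right F fun z hz => hz.2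
  choose! f hcmp hfsign using fun z (hz : z ∈ Z) => exists_cmp_eq_and_sign_eq hv hF hsign hmono hz
  have hf : StrictMonoOn f Z := by
    intro x hx y hy hxy
    obtain ⟨c, hc, hxc, hcy⟩ :=
      exists_mem_Icc_of_lt (fun a b h => (hmono a b h).injOn_left) (hZF hx) (hZF hy) hxy
    have hfxc : f x ≤ c := (le_iff_le_of_cmp_eq_cmp (hcmp x hx c hc)).2 hxc
    have hcfy : c ≤ f y := (le_iff_le_of_cmp_eq_cmp (cmp_eq_cmp_symm.1 (hcmp y hy c hc))).2 hcy
    rcases hxc.lt_or_eq with hxc | rfl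
    · exact ((lt_iff_lt_of_cmp_eq_cmp (hcmp x hx c hc)).2 hxc).trans_le hcfy
    · exact hfxc.trans_lt ((lt_iff_lt_of_cmp_eq_cmp (cmp_eq_cmp_symm.1 (hcmp y hy x hc))).2 hxy)
  obtain ⟨g, hg⟩ := exists_orderIso_eqOn (s := hZfin.toFinset) (f := f) (by simpa using hf)
  have g_eq (z : ℝ) (hz : z ∈ Z) : g z = f z := hg (by simpa using hz)
  have g_fix (c : ℝ) (hc : c ∈ F) : g c = c :=
    (g_eq c (.inl hc)).trans ((eq_iff_eq_of_cmp_eq_cmp (hcmp c (.inl hc) c hc)).2 rfl)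
  have sign_g (z : ℝ) (hz : z ∈ Z) : sign (u z) = sign (v (g z)) := g_eq z hz ▸ hfsign z hz
  refine ⟨g, g_fix, fun y hy => ?_⟩
  by_cases hyF : y ∈ F
  · exact sign_g y (.inl hyF)
  obtain ⟨a, haF, b, hbF, hyab, hab⟩ := exists_mem_Ioo_disjoint hF hy hyF
  have g_mapsTo : Set.MapsTo g (Set.Icc a b) (Set.Icc a b) := by
    have := g.monotone.mapsTo_Icc (a := a) (b := b)
    rwa [g_fix a haF, g_fix b hbF] at this
  refine ((hmono a b hab).comp_orderIso g g_mapsTo).sign_eq hu.continuousOn (sign_g a (.inl haF))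
    (sign_g b (.inl hbF)) (fun z hz huz => ?_) hyab
  exact (eq_zero_iff_of_sign_eq
    (sign_g z (.inr ⟨⟨⟨a, haF, hz.1.le⟩, b, hbF, hz.2.le⟩, huz⟩))).1 huz

end Alignment

section SignsOfPolynomials

theorem eventually_sign_eq_of_isEquivalent {α : Type*} {l : Filter α} {u v : α → ℝ}
    (h : Asymptotics.IsEquivalent l u v) : ∀ᶠ x in l, sign (u x) = sign (v x) := by
  obtain ⟨c, hc, huv⟩ := h.exists_eq_mul
  filter_upwards [huv, hc.eventually_const_lt zero_lt_one] with x hx hcx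
  rw [hx, Pi.mul_apply, sign_mul, sign_pos hcx, one_mul]

theorem eventually_atTop_sign_eval (P : ℝ[X]) :
    ∀ᶠ y in Filter.atTop, sign (P.eval y) = sign P.leadingCoeff := by
  filter_upwards [eventually_sign_eq_of_isEquivalent P.isEquivalent_atTop_lead,
    Filter.eventually_gt_atTop 0] with y hy hy0
  rw [hy, sign_mul, sign_pow, sign_pos hy0, one_pow, mul_one]

theorem eventually_atBot_sign_eval (P : ℝ[X]) :
    ∀ᶠ y in Filter.atBot, sign (P.eval y) = sign P.leadingCoeff * (-1) ^ P.natDegree := by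
  filter_upwards [eventually_sign_eq_of_isEquivalent P.isEquivalent_atBot_lead,
    Filter.eventually_lt_atBot 0] with y hy hy0
  rw [hy, sign_mul, sign_pow, sign_neg hy0]

theorem sign_apply_orderIso_eq {f : ℝ → ℝ} (hf : Continuous f) {g : ℝ ≃o ℝ}
    (hg : ∀ c, f c = 0 → g c = c) (y : ℝ) : sign (f (g y)) = sign (f y) := by
  by_cases! h0 : ∃ c ∈ Set.uIcc y (g y), f c = 0
  · obtain ⟨c, hc, hfc⟩ := h0
    have hgy : g y = y := by
      rcases Set.mem_uIcc.1 hc with ⟨hyc, hcy⟩ | ⟨hcy, hyc⟩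
      · exact le_antisymm
          ((hg c hfc ▸ g.monotone hyc).trans (g.le_iff_le.1 ((hg c hfc).symm ▸ hcy)))
          (hyc.trans hcy)
      · exact le_antisymm (hcy.trans hyc)
          ((g.le_iff_le.1 ((hg c hfc).symm ▸ hcy)).trans (hg c hfc ▸ g.monotone hyc))
    rw [hgy]
  · exact sign_eq_of_isPreconnected isPreconnected_uIcc hf.continuousOn h0 Set.right_mem_uIcc
      Set.left_mem_uIcc

/-- The reparametrization `h` of the line carries the sign pattern of `P` to that of `Q`. -/
def MatchesSigns (h : ℝ ≃o ℝ) (P Q : ℝ[X]) : Prop :=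
  ∀ y, sign (P.eval y) = sign (Q.eval (h y))

variable {h : ℝ ≃o ℝ} {P Q : ℝ[X]}

theorem strictMonoOn_eval_orderIso {a b : ℝ} (hQ : ∀ y ∈ Set.Ioo a b, 0 < Q.derivative.eval (h y)) :
    StrictMonoOn (fun y => Q.eval (h y)) (Set.Icc a b) := by
  have hQ' : StrictMonoOn (fun z => Q.eval z) (Set.Icc (h a) (h b)) := by
    refine strictMonoOn_of_deriv_pos (convex_Icc _ _) Q.continuous.continuousOn fun z hz => ?_
    rw [interior_Icc] at hz
    rw [Polynomial.deriv, ← h.apply_symm_apply z]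
    exact hQ _ ⟨h.lt_symm_apply.2 hz.1, h.symm_apply_lt.2 hz.2⟩
  exact hQ'.comp (h.strictMono.strictMonoOn _) h.monotone.mapsTo_Icc

theorem strictAntiOn_eval_orderIso {a b : ℝ} (hQ : ∀ y ∈ Set.Ioo a b, Q.derivative.eval (h y) < 0) :
    StrictAntiOn (fun y => Q.eval (h y)) (Set.Icc a b) := by
  have := (strictMonoOn_eval_orderIso (Q := -Q) (by simpa using hQ)).neg
  simpa using this

theorem MatchesSigns.sameStrictMonotonicityOn (hPQ : MatchesSigns h P.derivative Q.derivative)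
    {a b : ℝ} (hab : ∀ y ∈ Set.Ioo a b, P.derivative.eval y ≠ 0) :
    SameStrictMonotonicityOn (fun y => P.eval y) (fun y => Q.eval (h y)) (Set.Icc a b) := by
  by_cases! hpos : ∃ z ∈ Set.Ioo a b, 0 < P.derivative.eval z
  · obtain ⟨z, hz, hPz⟩ := hpos
    have hP (y : ℝ) (hy : y ∈ Set.Ioo a b) : sign (P.derivative.eval y) = 1 :=
      (sign_eq_of_isPreconnected isPreconnected_Ioo P.derivative.continuous.continuousOn hab hy
        hz).trans (sign_pos hPz)
    exact .inl ⟨strictMonoOn_eval_orderIso (h := .refl ℝ) fun y hy => sign_eq_one_iff.1 (hP y hy),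
      strictMonoOn_eval_orderIso fun y hy => sign_eq_one_iff.1 (hPQ y ▸ hP y hy)⟩
  · have hP (y : ℝ) (hy : y ∈ Set.Ioo a b) : sign (P.derivative.eval y) = -1 :=
      sign_neg ((hpos y hy).lt_of_ne (hab y hy))
    exact .inr ⟨strictAntiOn_eval_orderIso (h := .refl ℝ) fun y hy =>
        sign_eq_neg_one_iff.1 (hP y hy),
      strictAntiOn_eval_orderIso fun y hy => sign_eq_neg_one_iff.1 (hPQ y ▸ hP y hy)⟩

theorem exists_orderIso_matchesSigns_trans {F : Set ℝ} (hF : F.Finite)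
    (hcrit : ∀ y, P.derivative.IsRoot y → y ∈ F)
    (hderiv : MatchesSigns h P.derivative Q.derivative) (hdeg : P.natDegree = Q.natDegree)
    (hlead : sign P.leadingCoeff = sign Q.leadingCoeff)
    (hsign : ∀ c ∈ F, sign (P.eval c) = sign (Q.eval (h c))) :
    ∃ g : ℝ ≃o ℝ, (∀ c ∈ F, g c = c) ∧ MatchesSigns (g.trans h) P Q := by
  have hP : P ≠ 0 := by
    rintro rfl
    exact Set.infinite_univ (hF.subset fun y _ => hcrit y (by simp))
  obtain ⟨lo, hlo⟩ := Filter.eventually_atBot.1 ((eventually_atBot_sign_eval P).and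
    (h.tendsto_atBot.eventually (eventually_atBot_sign_eval Q)))
  obtain ⟨hi, hhi⟩ := Filter.eventually_atTop.1 ((eventually_atTop_sign_eval P).and
    (h.tendsto_atTop.eventually (eventually_atTop_sign_eval Q)))
  have sign_eq_lo {y z : ℝ} (hy : y ≤ lo) (hz : z ≤ lo) :
      sign (P.eval y) = sign (Q.eval (h z)) := by
    rw [(hlo y hy).1, (hlo z hz).2, hdeg, hlead]
  have sign_eq_hi {y z : ℝ} (hy : hi ≤ y) (hz : hi ≤ z) :
      sign (P.eval y) = sign (Q.eval (h z)) := by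
    rw [(hhi y hy).1, (hhi z hz).2, hlead]
  obtain ⟨g, hg, hPQ⟩ := exists_orderIso_sign_eq (F := insert lo (insert hi F)) P.continuous
    (Q.continuous.comp h.continuous) ((hF.insert hi).insert lo)
    (P.finite_setOfPred_isRoot hP)
    (by simpa using ⟨sign_eq_lo le_rfl le_rfl, sign_eq_hi le_rfl le_rfl, hsign⟩)
    fun a b hab => hderiv.sameStrictMonotonicityOn fun y hy hPy =>
      Set.disjoint_left.1 hab hy (.inr (.inr (hcrit y hPy)))
  have hglo : g lo = lo := hg lo (.inl rfl)
  have hghi : g hi = hi := hg hi (.inr (.inl rfl))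
  refine ⟨g, fun c hc => hg c (.inr (.inr hc)), fun y => ?_⟩
  rcases le_total y lo with hy | hloy
  · exact sign_eq_lo hy (hglo ▸ g.monotone hy)
  rcases le_total hi y with hy | hyhi
  · exact sign_eq_hi hy (hghi ▸ g.monotone hy)
  exact hPQ y ⟨⟨lo, .inl rfl, hloy⟩, hi, .inr (.inl rfl), hyhi⟩

theorem exists_matchesSigns_of_derivative {B : Set (ℝ[X] × ℝ[X])} (hB : B.Finite)
    (hh : ∀ R ∈ B, MatchesSigns h R.1 R.2) (hderiv : (P.derivative, Q.derivative) ∈ B)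
    (hdeg : P.natDegree = Q.natDegree) (hlead : sign P.leadingCoeff = sign Q.leadingCoeff)
    (hroots : ∀ R ∈ B, R.1 ≠ 0 → ∀ y, R.1.IsRoot y → sign (P.eval y) = sign (Q.eval (h y))) :
    ∃ h' : ℝ ≃o ℝ, MatchesSigns h' P Q ∧ ∀ R ∈ B, MatchesSigns h' R.1 R.2 := by
  by_cases hP : P.natDegree = 0
  · obtain ⟨c, rfl⟩ := natDegree_eq_zero.1 hP
    obtain ⟨d, rfl⟩ := natDegree_eq_zero.1 (hdeg ▸ hP)
    exact ⟨h, fun y => by simpa using hlead, hh⟩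
  set F : Set ℝ := ⋃ R ∈ {R ∈ B | R.1 ≠ 0}, {y | R.1.IsRoot y}
  have hF : F.Finite := (hB.sep _).biUnion fun R hR => finite_setOfPred_isRoot hR.2
  have mem_F {R : ℝ[X] × ℝ[X]} (hR : R ∈ B) (hR0 : R.1 ≠ 0) {y : ℝ} (hy : R.1.IsRoot y) : y ∈ F :=
    Set.mem_biUnion (show R ∈ {R ∈ B | R.1 ≠ 0} from ⟨hR, hR0⟩) hy
  have hP' : P.derivative ≠ 0 := fun h0 => hP (derivative_eq_zero.1 h0)
  have hsign (c : ℝ) (hc : c ∈ F) : sign (P.eval c) = sign (Q.eval (h c)) := by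
    obtain ⟨R, hR, hcR⟩ := Set.mem_iUnion₂.1 hc
    exact hroots R hR.1 hR.2 c hcR
  obtain ⟨g, hg, hPQ⟩ := exists_orderIso_matchesSigns_trans hF (fun y => mem_F hderiv hP')
    (hh _ hderiv) hdeg hlead hsign
  refine ⟨g.trans h, hPQ, fun R hR y => ?_⟩
  rw [OrderIso.trans_apply, ← hh R hR (g y)]
  by_cases hR0 : R.1 = 0
  · simp [hR0]
  · exact (sign_apply_orderIso_eq R.1.continuous (fun c hc => hg c (mem_F hR hR0 hc)) y).symm

end SignsOfPolynomials

section PseudoDivision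

variable {A : Type*} [CommRing A]

theorem degree_coeff_mul_sub_lt {p q : A[X]} {j n : ℕ} (hq : q.degree ≤ j) (hjn : j ≤ n)
    (hp : p.degree ≤ n) :
    (C (q.coeff j) * p - C (p.coeff n) * X ^ (n - j) * q).degree < (n : WithBot ℕ) := by
  rw [degree_le_iff_coeff_zero] at hp hq
  refine (degree_lt_iff_coeff_zero _ _).2 fun m hm => ?_
  rw [mul_assoc, coeff_sub, coeff_C_mul, coeff_C_mul, coeff_X_pow_mul',
    if_pos ((Nat.sub_le n j).trans hm)]
  rcases hm.eq_or_lt with rfl | hm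
  · rw [Nat.sub_sub_self hjn]
    ring
  · rw [hp m (by exact_mod_cast hm), hq (m - (n - j)) (by norm_cast; omega), mul_zero, mul_zero,
      sub_self]

theorem exists_pow_coeff_mul_eq_mul_add (p : A[X]) {q : A[X]} {j : ℕ} (hq : q.degree ≤ j) :
    ∃ (k : ℕ) (a r : A[X]), r.degree < j ∧ C (q.coeff j) ^ k * p = a * q + r := by
  induction p using degree_lt_wf.induction with | _ p ih
  rcases lt_or_ge p.degree j with hp | hp
  · exact ⟨0, 0, p, hp, by simp⟩
  have hp0 : p ≠ 0 := by
    rintro rfl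
    simp at hp
  have hpn : p.degree = p.natDegree := degree_eq_natDegree hp0
  have hjn : j ≤ p.natDegree := by
    rw [hpn] at hp
    exact_mod_cast hp
  obtain ⟨k, a, r, hr, h⟩ :=
    ih _ ((degree_coeff_mul_sub_lt hq hjn hpn.le).trans_eq hpn.symm)
  exact ⟨k + 1, a + C (q.coeff j) ^ k * (C (p.coeff p.natDegree) * X ^ (p.natDegree - j)), r, hr,
    by linear_combination h⟩

theorem exists_pow_coeff_mul_eval₂_eq (S : Type*) [CommRing S] (p q : A[X]) (j : ℕ) :
    ∃ (k : ℕ) (r : A[X]), r.degree < j ∧ ∀ (χ : A →+* S) (y : S),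
      (∀ m, j < m → χ (q.coeff m) = 0) → q.eval₂ χ y = 0 →
        χ (q.coeff j) ^ k * p.eval₂ χ y = r.eval₂ χ y := by
  set t : A[X] := PowerSeries.trunc (j + 1) (q : PowerSeries A)
  have ht : t.degree ≤ j := Order.lt_succ_iff.1 (PowerSeries.degree_trunc_lt _ _)
  have htj : t.coeff j = q.coeff j := by simp [t, PowerSeries.coeff_trunc]
  obtain ⟨k, a, r, hr, h⟩ := exists_pow_coeff_mul_eq_mul_add p ht
  refine ⟨k, r, hr, fun χ y hχ hy => ?_⟩
  have htq : t.map χ = q.map χ := by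
    ext m
    rcases le_or_gt m j with hm | hm
    · simp [t, PowerSeries.coeff_trunc, hm]
    · simp [t, PowerSeries.coeff_trunc, hχ m hm, hm.not_ge]
  have hty : t.eval₂ χ y = 0 := by rw [← eval_map, htq, eval_map, hy]
  simpa [htj, hty, eval₂_mul, eval₂_pow] using congrArg (eval₂ χ y) h

end PseudoDivision

section UnivariateProjection

variable {A : Type*} [CommRing A]

theorem exists_finite_sign_eval_eq_of_isRoot (p q : A[X]) {d : ℕ} (hq : q.degree ≤ d) :
    ∃ R : Set A[X], R.Finite ∧ (∀ r ∈ R, r.degree < d) ∧ ∀ (φ ψ : A →+* ℝ) (h : ℝ ≃o ℝ),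
      (∀ m, sign (φ (q.coeff m)) = sign (ψ (q.coeff m))) →
      MatchesSigns h (q.map φ) (q.map ψ) → (∀ r ∈ R, MatchesSigns h (r.map φ) (r.map ψ)) →
      q.map φ ≠ 0 → ∀ y, (q.map φ).IsRoot y →
        sign ((p.map φ).eval y) = sign ((p.map ψ).eval (h y)) := by
  choose k r hr hkr using exists_pow_coeff_mul_eval₂_eq ℝ p q
  refine ⟨r '' Set.Iic d, (Set.finite_Iic d).image r, ?_,
    fun φ ψ h hcoeff hmatch hR hq0 y hy => ?_⟩
  · rintro _ ⟨j, hj, rfl⟩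
    exact (hr j).trans_le (by exact_mod_cast hj)
  set j := (q.map φ).natDegree
  have hjd : j ≤ d := natDegree_map_le.trans (natDegree_le_of_degree_le hq)
  have hj : φ (q.coeff j) ≠ 0 := by
    rw [← coeff_map]
    exact leadingCoeff_ne_zero.2 hq0
  have hφ (m : ℕ) (hm : j < m) : φ (q.coeff m) = 0 := by
    rw [← coeff_map]
    exact coeff_eq_zero_of_natDegree_lt hm
  have hψ (m : ℕ) (hm : j < m) : ψ (q.coeff m) = 0 :=
    (eq_zero_iff_of_sign_eq (hcoeff m)).1 (hφ m hm)
  have hhy : (q.map ψ).eval (h y) = 0 := (eq_zero_iff_of_sign_eq (hmatch y)).1 hy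
  have hrem := hR (r j) ⟨j, hjd, rfl⟩ y
  rw [eval_map, eval_map, ← hkr j φ y hφ (by rw [← eval_map, hy.eq_zero]),
    ← hkr j ψ (h y) hψ (by rw [← eval_map, hhy]), sign_mul, sign_mul, sign_pow, sign_pow,
    ← hcoeff j] at hrem
  rw [eval_map, eval_map]
  exact mul_left_cancel₀ (pow_ne_zero _ (sign_ne_zero.2 hj)) hrem

theorem exists_matchesSigns_map {φ ψ : A →+* ℝ} {h : ℝ ≃o ℝ} {p : A[X]} {B : Set A[X]}
    (hB : B.Finite) (hh : ∀ q ∈ B, MatchesSigns h (q.map φ) (q.map ψ))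
    (hderiv : p.derivative ∈ B) (herase : p.eraseLead ∈ B)
    (hlead : sign (φ p.leadingCoeff) = sign (ψ p.leadingCoeff))
    (hroots : ∀ q ∈ B, q.map φ ≠ 0 → ∀ y, (q.map φ).IsRoot y →
      sign ((p.map φ).eval y) = sign ((p.map ψ).eval (h y))) :
    ∃ h' : ℝ ≃o ℝ, MatchesSigns h' (p.map φ) (p.map ψ) ∧
      ∀ q ∈ B, MatchesSigns h' (q.map φ) (q.map ψ) := by
  by_cases hφ : φ p.leadingCoeff = 0
  · have map_eraseLead (χ : A →+* ℝ) (hχ : χ p.leadingCoeff = 0) : p.map χ = p.eraseLead.map χ := by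
      conv_lhs => rw [← p.eraseLead_add_C_mul_X_pow]
      simp only [Polynomial.map_add, Polynomial.map_mul, map_C, hχ, C_0, zero_mul, add_zero]
    refine ⟨h, ?_, hh⟩
    rw [map_eraseLead φ hφ, map_eraseLead ψ ((eq_zero_iff_of_sign_eq hlead).1 hφ)]
    exact hh _ herase
  · have hψ : ψ p.leadingCoeff ≠ 0 := fun h0 => hφ ((eq_zero_iff_of_sign_eq hlead).2 h0)
    obtain ⟨h', hp, hB'⟩ := exists_matchesSigns_of_derivative (h := h) (P := p.map φ)
      (Q := p.map ψ) (hB.image fun q => (q.map φ, q.map ψ)) (Set.forall_mem_image.2 hh)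
      ⟨_, hderiv, by rw [derivative_map, derivative_map]⟩
      (by rw [natDegree_map_of_leadingCoeff_ne_zero _ hφ,
        natDegree_map_of_leadingCoeff_ne_zero _ hψ])
      (by rwa [leadingCoeff_map_of_leadingCoeff_ne_zero _ hφ,
        leadingCoeff_map_of_leadingCoeff_ne_zero _ hψ])
      (Set.forall_mem_image.2 hroots)
    exact ⟨h', hp, Set.forall_mem_image.1 hB'⟩

/-- The signs that the elements of `D` take at a real point of `A` determine the joint sign pattern
of the specializations of the polynomials in `F`, up to a reparametrization of the line. Ring
homomorphisms `A →+* ℝ` play the part of the real points. -/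
def DeterminesSignPattern (D : Set A) (F : Set A[X]) : Prop :=
  ∀ φ ψ : A →+* ℝ, (∀ δ ∈ D, sign (φ δ) = sign (ψ δ)) →
    ∃ h : ℝ ≃o ℝ, ∀ q ∈ F, MatchesSigns h (q.map φ) (q.map ψ)

theorem exists_determinesSignPattern_insert {p : A[X]} {L T : Set A[X]} {d : ℕ}
    (hp : p.degree ≤ d) (hL : L.Finite) (hLd : ∀ q ∈ L, q.degree < d) (hT : T.Finite)
    (hTd : ∀ q ∈ T, q.degree ≤ d)
    (ih : ∀ L' : Set A[X], L'.Finite → (∀ q ∈ L', q.degree < d) →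
      ∃ D : Set A, D.Finite ∧ DeterminesSignPattern D (L' ∪ T)) :
    ∃ D : Set A, D.Finite ∧ DeterminesSignPattern D (L ∪ insert p T) := by
  by_cases hp0 : p = 0
  · obtain ⟨D, hD, hDLT⟩ := ih L hL hLd
    refine ⟨D, hD, fun φ ψ hs => ?_⟩
    obtain ⟨h, hh⟩ := hDLT φ ψ hs
    refine ⟨h, ?_⟩
    rw [Set.union_insert, Set.forall_mem_insert]
    exact ⟨fun y => by simp [hp0], hh⟩
  set L' : Set A[X] := insert p.derivative (insert p.eraseLead L)
  have hL'd : ∀ q ∈ L', q.degree < d := by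
    simpa [L'] using ⟨(degree_derivative_lt hp0).trans_le hp, (degree_eraseLead_lt hp0).trans_le hp,
      hLd⟩
  have hB : (L' ∪ T).Finite := ((hL.insert _).insert _).union hT
  have hBd (q : A[X]) (hq : q ∈ L' ∪ T) : q.degree ≤ d := hq.elim (fun hq => (hL'd q hq).le) (hTd q)
  choose! R hR hRd hroots using fun q hq => exists_finite_sign_eval_eq_of_isRoot p q (hBd q hq)
  obtain ⟨D, hD, hdet⟩ := ih (L' ∪ ⋃ q ∈ L' ∪ T, R q)
    (((hL.insert _).insert _).union (hB.biUnion hR)) (by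
      rintro r (hr | hr)
      · exact hL'd r hr
      · obtain ⟨q, hq, hr⟩ := Set.mem_iUnion₂.1 hr
        exact hRd q hq r hr)
  refine ⟨D ∪ ⋃ q ∈ insert p (L' ∪ T), Set.range q.coeff,
    hD.union ((hB.insert p).biUnion fun q _ => finite_range_coeff q), fun φ ψ hs => ?_⟩
  have hcoeff (q : A[X]) (hq : q ∈ insert p (L' ∪ T)) (m : ℕ) :
      sign (φ (q.coeff m)) = sign (ψ (q.coeff m)) :=
    hs _ (.inr (Set.mem_biUnion hq ⟨m, rfl⟩))
  obtain ⟨h, hh⟩ := hdet φ ψ fun δ hδ => hs δ (.inl hδ)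
  have hhB (q : A[X]) (hq : q ∈ L' ∪ T) : MatchesSigns h (q.map φ) (q.map ψ) :=
    hh q (hq.imp_left .inl)
  obtain ⟨h', hp', hB'⟩ := exists_matchesSigns_map hB hhB (.inl (.inl rfl)) (.inl (.inr (.inl rfl)))
    (hcoeff p (.inl rfl) p.natDegree) fun q hq => hroots q hq φ ψ h (hcoeff q (.inr hq)) (hhB q hq)
      fun r hr => hh r (.inl (.inr (Set.mem_biUnion hq hr)))
  refine ⟨h', ?_⟩
  rw [Set.union_insert, Set.forall_mem_insert]
  exact ⟨hp', fun q hq => hB' q (hq.imp_left fun hq => .inr (.inr hq))⟩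

theorem exists_determinesSignPattern_of_degree_lt (d : ℕ) {F : Set A[X]} (hF : F.Finite)
    (hFd : ∀ q ∈ F, q.degree < d) : ∃ D : Set A, D.Finite ∧ DeterminesSignPattern D F := by
  induction d generalizing F with
  | zero =>
    have hF0 (q : A[X]) (hq : q ∈ F) : q = 0 := by simpa using hFd q hq
    exact ⟨∅, Set.finite_empty, fun φ ψ _ => ⟨.refl ℝ, fun q hq y => by simp [hF0 q hq]⟩⟩
  | succ d ihd =>
    have hFd' (q : A[X]) (hq : q ∈ F) : q.degree ≤ d :=
      Order.lt_succ_iff.1 (by exact_mod_cast hFd q hq)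
    suffices H : ∀ T : Set A[X], T.Finite → (∀ q ∈ T, q.degree ≤ d) →
        ∀ L : Set A[X], L.Finite → (∀ q ∈ L, q.degree < d) →
          ∃ D : Set A, D.Finite ∧ DeterminesSignPattern D (L ∪ T) by
      simpa using H F hF hFd' ∅ Set.finite_empty (by simp)
    intro T hT
    induction T, hT using Set.Finite.induction_on with
    | empty => simpa using fun L => ihd (F := L)
    | @insert p T _ hT ih =>
      intro hTd L hL hLd
      rw [Set.forall_mem_insert] at hTd
      exact exists_determinesSignPattern_insert hTd.1 hL hLd hT hTd.2 (ih hTd.2)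

theorem exists_determinesSignPattern {F : Set A[X]} (hF : F.Finite) :
    ∃ D : Set A, D.Finite ∧ DeterminesSignPattern D F := by
  obtain ⟨d, hd⟩ := (hF.image natDegree).bddAbove
  exact exists_determinesSignPattern_of_degree_lt (d + 1) hF fun q hq =>
    degree_le_natDegree.trans_lt (by exact_mod_cast Nat.lt_succ_of_le (hd ⟨q, hq, rfl⟩))

end UnivariateProjection

section Projection

theorem eval₂_cons_eq_eval_map_finSuccEquiv {A S : Type*} [CommRing A] [CommRing S] (φ : A →+* S)
    {n : ℕ} (y : S) (x : Fin n → S) (q : MvPolynomial (Fin (n + 1)) A) :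
    MvPolynomial.eval₂ φ (Fin.cons y x : Fin (n + 1) → S) q =
      ((MvPolynomial.finSuccEquiv A n q).map (MvPolynomial.eval₂Hom φ x)).eval y := by
  have H : MvPolynomial.eval₂Hom φ (Fin.cons y x : Fin (n + 1) → S) =
      ((evalRingHom y).comp (mapRingHom (MvPolynomial.eval₂Hom φ x))).comp
        (MvPolynomial.finSuccEquiv A n : MvPolynomial (Fin (n + 1)) A →+* _) := by
    refine MvPolynomial.ringHom_ext (fun a => ?_) fun i => ?_
    · simp [MvPolynomial.finSuccEquiv_apply]
    · cases i using Fin.cases <;> simp [MvPolynomial.finSuccEquiv_apply]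
  exact DFunLike.congr_fun H q

theorem exists_finite_forall_exists_sign_eval₂_eq {A : Type*} [CommRing A] {n : ℕ}
    {F : Set (MvPolynomial (Fin n) A)} (hF : F.Finite) :
    ∃ D : Set A, D.Finite ∧ ∀ φ ψ : A →+* ℝ, (∀ δ ∈ D, sign (φ δ) = sign (ψ δ)) →
      ∀ x : Fin n → ℝ, ∃ x' : Fin n → ℝ, ∀ q ∈ F,
        sign (MvPolynomial.eval₂ φ x q) = sign (MvPolynomial.eval₂ ψ x' q) := by
  induction n with
  | zero =>
    refine ⟨MvPolynomial.isEmptyRingEquiv A (Fin 0) '' F, hF.image _,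
      fun φ ψ hs x => ⟨x, fun q hq => ?_⟩⟩
    obtain ⟨a, rfl⟩ := (MvPolynomial.isEmptyRingEquiv A (Fin 0)).symm.surjective q
    simpa using hs _ ⟨_, hq, RingEquiv.apply_symm_apply _ a⟩
  | succ n ih =>
    obtain ⟨D₁, hD₁, hF₁⟩ := exists_determinesSignPattern (hF.image (MvPolynomial.finSuccEquiv A n))
    obtain ⟨D, hD, hlift⟩ := ih hD₁
    refine ⟨D, hD, fun φ ψ hs x => ?_⟩
    obtain ⟨x', hx'⟩ := hlift φ ψ hs (Fin.tail x)
    obtain ⟨h, hh⟩ := hF₁ (MvPolynomial.eval₂Hom φ (Fin.tail x)) (MvPolynomial.eval₂Hom ψ x') hx'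
    refine ⟨(Fin.cons (h (x 0)) x' : Fin (n + 1) → ℝ), fun q hq => ?_⟩
    rw [← Fin.cons_self_tail x, eval₂_cons_eq_eval_map_finSuccEquiv,
      eval₂_cons_eq_eval_map_finSuccEquiv]
    exact hh _ ⟨q, hq, rfl⟩ (x 0)

end Projection

section Image

/-- Membership in `S` depends only on the signs of the polynomials in `G`. For finite `G` this is
how semialgebraicity of `S` enters the argument. -/
def IsDeterminedBySigns {n : ℕ} (S : Set (Fin n → ℝ)) (G : Set (MvPolynomial (Fin n) ℝ)) : Prop :=
  ∀ x x', (∀ g ∈ G, sign (MvPolynomial.eval x g) = sign (MvPolynomial.eval x' g)) →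
    x ∈ S → x' ∈ S

/-- Membership in `T` does not change along a segment that avoids `F`. For finite `F` this is how
the fact that `T` is a finite union of points and open intervals is encoded. -/
def IsSaturatedOff (T F : Set ℝ) : Prop :=
  ∀ ⦃x y⦄, Disjoint (Set.uIcc x y) F → x ∈ T → y ∈ T

theorem exists_finite_sign_eval_eq_of_disjoint {D : Set ℝ[X]} (hD : D.Finite) :
    ∃ F : Set ℝ, F.Finite ∧ ∀ x y, Disjoint (Set.uIcc x y) F →
      ∀ δ ∈ D, sign (δ.eval x) = sign (δ.eval y) := by
  refine ⟨⋃ δ ∈ {δ ∈ D | δ ≠ 0}, {t | δ.IsRoot t},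
    (hD.sep _).biUnion fun δ hδ => finite_setOfPred_isRoot hδ.2, fun x y hxy δ hδ => ?_⟩
  by_cases h0 : δ = 0
  · simp [h0]
  · exact sign_eq_of_isPreconnected isPreconnected_uIcc δ.continuous.continuousOn
      (fun t ht ht0 => Set.disjoint_left.1 hxy ht
        (Set.mem_biUnion (show δ ∈ {δ ∈ D | δ ≠ 0} from ⟨hδ, h0⟩) ht0))
      Set.left_mem_uIcc Set.right_mem_uIcc

theorem IsDeterminedBySigns.exists_isSaturatedOff_image {n : ℕ} {S : Set (Fin n → ℝ)}
    {G : Set (MvPolynomial (Fin n) ℝ)} (hS : IsDeterminedBySigns S G) (hG : G.Finite)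
    (f : MvPolynomial (Fin n) ℝ) :
    ∃ F : Set ℝ, F.Finite ∧ IsSaturatedOff ((fun x => MvPolynomial.eval x f) '' S) F := by
  -- The value `t` of `f` becomes a parameter: work over `ℝ[X]`, specialized at `X = t`.
  have eval₂_map_C (t : ℝ) (x : Fin n → ℝ) (g : MvPolynomial (Fin n) ℝ) :
      MvPolynomial.eval₂ (evalRingHom t) x (MvPolynomial.map C g) = MvPolynomial.eval x g := by
    rw [MvPolynomial.eval₂_map, show (evalRingHom t).comp C = RingHom.id ℝ by ext; simp]
    rfl
  have eval₂_sub_X (t : ℝ) (x : Fin n → ℝ) : MvPolynomial.eval₂ (evalRingHom t) x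
      (MvPolynomial.map C f - MvPolynomial.C X) = MvPolynomial.eval x f - t := by
    rw [MvPolynomial.eval₂_sub, eval₂_map_C, MvPolynomial.eval₂_C, coe_evalRingHom, eval_X]
  obtain ⟨D, hD, hlift⟩ := exists_finite_forall_exists_sign_eval₂_eq
    ((hG.image (MvPolynomial.map C)).insert (MvPolynomial.map C f - MvPolynomial.C X))
  obtain ⟨F, hF, hsign⟩ := exists_finite_sign_eval_eq_of_disjoint hD
  refine ⟨F, hF, ?_⟩
  rintro _ t hdisj ⟨x, hx, rfl⟩
  obtain ⟨x', hx'⟩ := hlift (evalRingHom _) (evalRingHom t) (hsign _ _ hdisj) x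
  rw [Set.forall_mem_insert, Set.forall_mem_image, eval₂_sub_X, eval₂_sub_X] at hx'
  refine ⟨x', hS x x' (fun g hg => ?_) hx,
    sub_eq_zero.1 ((eq_zero_iff_of_sign_eq hx'.1).1 (sub_self _))⟩
  simpa only [eval₂_map_C] using hx'.2 hg

theorem isDeterminedBySigns_iUnion_basic {n : ℕ} {ι : Type*} {κ μ : ι → Type*}
    (P : ∀ u, κ u → MvPolynomial (Fin n) ℝ) (Q : ∀ u, μ u → MvPolynomial (Fin n) ℝ) :
    IsDeterminedBySigns
      (⋃ u, {x | (∀ i, 0 < MvPolynomial.eval x (P u i)) ∧ ∀ k, MvPolynomial.eval x (Q u k) = 0})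
      ((⋃ u, Set.range (P u)) ∪ ⋃ u, Set.range (Q u)) := by
  intro x x' hs hx
  obtain ⟨u, hP, hQ⟩ := Set.mem_iUnion.1 hx
  refine Set.mem_iUnion.2 ⟨u, fun i => ?_, fun k => ?_⟩
  · rw [← sign_eq_one_iff, ← hs _ (.inl (Set.mem_iUnion.2 ⟨u, i, rfl⟩)), sign_pos (hP i)]
  · exact (eq_zero_iff_of_sign_eq (hs _ (.inr (Set.mem_iUnion.2 ⟨u, k, rfl⟩)))).1 (hQ k)

end Image

section Closure

variable {T F : Set ℝ}

theorem IsSaturatedOff.mem_of_mem_closure (hT : IsSaturatedOff T F) (hF : IsClosed F) {t : ℝ}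
    (ht : t ∈ closure T) (htF : t ∉ F) : t ∈ T := by
  obtain ⟨ε, hε, hball⟩ := Metric.isOpen_iff.1 hF.isOpen_compl t htF
  obtain ⟨s, hs, hts⟩ := Metric.mem_closure_iff.1 ht ε hε
  refine hT (Set.disjoint_left.2 fun c hc => hball ?_) hs
  exact (convex_ball t ε).ordConnected.uIcc_subset (Metric.mem_ball'.2 hts)
    (Metric.mem_ball_self hε) hc

theorem IsSaturatedOff.mem_upperClosure (hT : IsSaturatedOff T F) (hb : BddBelow T) {t : ℝ}
    (ht : t ∈ T) : t ∈ upperClosure F := by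
  by_contra hF
  refine not_bddBelow_Iic t (hb.mono fun y hy => hT (Set.disjoint_left.2 fun c hc hcF => hF ?_) ht)
  exact ⟨c, hcF, (Set.uIcc_of_ge (Set.mem_Iic.1 hy) ▸ hc).2⟩

theorem IsSaturatedOff.mem_lowerClosure (hT : IsSaturatedOff T F) (hb : BddAbove T) {t : ℝ}
    (ht : t ∈ T) : t ∈ lowerClosure F := by
  by_contra hF
  refine not_bddAbove_Ici t (hb.mono fun y hy => hT (Set.disjoint_left.2 fun c hc hcF => hF ?_) ht)
  exact ⟨c, hcF, (Set.uIcc_of_le (Set.mem_Ici.1 hy) ▸ hc).1⟩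

theorem IsSaturatedOff.exists_Icc_subset_closure (hT : IsSaturatedOff T F) (hF : F.Finite)
    (hb : Bornology.IsBounded T) {t : ℝ} (ht : t ∈ closure T) :
    ∃ a ∈ F, ∃ b ∈ F, t ∈ Set.Icc a b ∧ Set.Icc a b ⊆ closure T := by
  by_cases htF : t ∈ F
  · exact ⟨t, htF, t, htF, ⟨le_rfl, le_rfl⟩, by simpa using ht⟩
  have htT : t ∈ T := hT.mem_of_mem_closure hF.isClosed ht htF
  obtain ⟨a, ha, b, hb, htab, hdisj⟩ := exists_mem_Ioo_disjoint hF
    ⟨hT.mem_upperClosure hb.bddBelow htT, hT.mem_lowerClosure hb.bddAbove htT⟩ htF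
  refine ⟨a, ha, b, hb, Set.Ioo_subset_Icc_self htab, ?_⟩
  rw [← closure_Ioo (htab.1.trans htab.2).ne]
  exact closure_mono fun x hx =>
    hT (hdisj.mono_left (Set.ordConnected_Ioo.uIcc_subset htab hx)) htT

theorem IsSaturatedOff.exists_closure_eq_iUnion_Icc (hT : IsSaturatedOff T F) (hF : F.Finite)
    (hb : Bornology.IsBounded T) :
    ∃ (w : ℕ) (a b : Fin w → ℝ), (∀ j, a j ≤ b j) ∧ closure T = ⋃ j, Set.Icc (a j) (b j) := by
  set J : Set (ℝ × ℝ) := {I ∈ F ×ˢ F | I.1 ≤ I.2 ∧ Set.Icc I.1 I.2 ⊆ closure T}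
  obtain ⟨w, I, -, hI⟩ := ((hF.prod hF).sep _ : J.Finite).fin_param
  have mem_J (j : Fin w) : I j ∈ J := hI.subset ⟨j, rfl⟩
  refine ⟨w, fun j => (I j).1, fun j => (I j).2, fun j => (mem_J j).2.1,
    Set.Subset.antisymm (fun t ht => ?_) (Set.iUnion_subset fun j => (mem_J j).2.2)⟩
  obtain ⟨a, ha, b, hb, htab, hsub⟩ := hT.exists_Icc_subset_closure hF hb ht
  have habJ : (a, b) ∈ J := ⟨⟨ha, hb⟩, htab.1.trans htab.2, hsub⟩
  obtain ⟨j, hj⟩ := hI.superset habJ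
  exact Set.mem_iUnion.2 ⟨j, by simpa only [hj] using htab⟩

theorem isLeast_range_sInf_of_closure_eq_iUnion_Icc (hne : T.Nonempty) (hb : BddBelow T)
    {ι : Type*} {a b : ι → ℝ} (hab : ∀ j, a j ≤ b j)
    (hT : closure T = ⋃ j, Set.Icc (a j) (b j)) : IsLeast (Set.range a) (sInf T) := by
  have hlb : closure T ⊆ Set.Ici (sInf T) :=
    closure_minimal (fun t ht => csInf_le hb ht) isClosed_Ici
  have ha (j : ι) : sInf T ≤ a j :=
    hlb (hT.symm ▸ Set.mem_iUnion.2 ⟨j, Set.left_mem_Icc.2 (hab j)⟩)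
  obtain ⟨j, hj⟩ := Set.mem_iUnion.1 (hT ▸ csInf_mem_closure hne hb)
  exact ⟨⟨j, hj.1.antisymm (ha j)⟩, Set.forall_mem_range.2 ha⟩

end Closure

section TruncatedPreordering

variable {m l k : ℕ} {p : Fin m → ℝ[X]} {q : Fin l → ℝ[X]}

theorem isSumOfSquaresPoly_zero : IsSumOfSquaresPoly 0 :=
  ⟨0, 0, by simp⟩

theorem isSumOfSquaresPoly_one : IsSumOfSquaresPoly 1 :=
  ⟨1, 1, by simp⟩

theorem IsSumOfSquaresPoly.eval_nonneg {σ : ℝ[X]} (hσ : IsSumOfSquaresPoly σ) (t : ℝ) :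
    0 ≤ σ.eval t := by
  obtain ⟨r, h, rfl⟩ := hσ
  rw [eval_finsetSum]
  exact Finset.sum_nonneg fun i _ => by rw [eval_pow]; positivity

theorem MemTrunc.eval_nonneg {g : ℝ[X]} (hg : MemTrunc k p q g) {t : ℝ}
    (hp : ∀ i, 0 ≤ (p i).eval t) (hq : ∀ j, (q j).eval t = 0) : 0 ≤ g.eval t := by
  obtain ⟨σ, ψ, hσ, -, -, rfl⟩ := hg
  have hψ : (∑ j, ψ j * q j).eval t = 0 := by
    rw [eval_finsetSum]
    exact Finset.sum_eq_zero fun j _ => by rw [eval_mul, hq, mul_zero]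
  rw [eval_add, hψ, add_zero, eval_finsetSum]
  refine Finset.sum_nonneg fun α _ => ?_
  rw [eval_mul, eval_prod]
  refine mul_nonneg ((hσ α).eval_nonneg t) (Finset.prod_nonneg fun i _ => ?_)
  split_ifs
  · exact hp i
  · simp

theorem memTrunc_inequality (i : Fin m) (hi : (p i).degree ≤ (2 * k : ℕ)) :
    MemTrunc k p q (p i) := by
  set α₀ : Fin m → Bool := fun i' => i' = i
  have prod_α₀ : (∏ i', if α₀ i' then p i' else 1) = p i := by simp [α₀]
  refine ⟨Pi.single α₀ 1, 0, fun α => ?_, fun α => ?_, fun j => by simp, ?_⟩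
  · obtain rfl | hα := eq_or_ne α α₀
    · simpa using isSumOfSquaresPoly_one
    · simpa [hα] using isSumOfSquaresPoly_zero
  · obtain rfl | hα := eq_or_ne α α₀
    · rwa [Pi.single_eq_same, one_mul, prod_α₀]
    · simp [hα]
  · rw [Finset.sum_eq_single_of_mem α₀ (Finset.mem_univ _) fun α _ hα => by simp [hα],
      Pi.single_eq_same, one_mul, prod_α₀]
    simp

theorem memTrunc_equation (j : Fin l) (hj : (q j).degree ≤ (2 * k : ℕ)) :
    MemTrunc k p q (q j) := by
  refine ⟨0, Pi.single j 1, fun _ => isSumOfSquaresPoly_zero, fun α => by simp, fun j' => ?_, ?_⟩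
  · obtain rfl | hj' := eq_or_ne j' j
    · simpa using hj
    · simp [hj']
  · simp [Pi.single_apply]

theorem sSup_memTrunc_X_sub_C_eq {a : ℝ} (ha : MemTrunc k p q (X - C a))
    (hp : ∀ i, 0 ≤ (p i).eval a) (hq : ∀ j, (q j).eval a = 0) :
    sSup {lam : ℝ | MemTrunc k p q (X - C lam)} = a :=
  IsGreatest.csSup_eq ⟨ha, fun lam hlam => by
    simpa using MemTrunc.eval_nonneg (show MemTrunc k p q (X - C lam) from hlam) hp hq⟩

end TruncatedPreordering

section IntervalDescription

open Classical in
/-- The inequalities describing `[a, b]`. For `a = b` the polynomials `X - C a` and `C b - X` have a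
common root, so the point is described by the equation `X - C a` instead, and the inequalities are
`1 ≥ 0`. -/
noncomputable def intervalInequalities (a b : ℝ) : Fin 2 → ℝ[X] :=
  if a < b then ![X - C a, C b - X] else 1

open Classical in
/-- The equation accompanying `intervalInequalities a b`; it is trivial unless `a = b`. -/
noncomputable def intervalEquation (a b : ℝ) : Fin 1 → ℝ[X] :=
  if a < b then 0 else fun _ => X - C a

theorem hasOnlySimpleComplexRoots_of_separable {p : ℝ[X]} (hp : p.Separable) :
    HasOnlySimpleComplexRoots p :=
  ⟨hp.ne_zero, fun a => rootMultiplicity_le_one_of_separable hp.map a⟩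

theorem not_hasCommonComplexRoot_of_isCoprime {p q : ℝ[X]} (hpq : IsCoprime p q) :
    ¬ HasCommonComplexRoot p q := by
  rintro ⟨z, hp, hq⟩
  simpa [hp, hq] using hpq.map (aeval z).toRingHom

theorem separable_intervalInequalities (a b : ℝ) (i : Fin 2) :
    (intervalInequalities a b i).Separable := by
  have hneg : (C b - X).Separable := by
    simpa using (separable_X_sub_C (x := b)).unit_mul (isUnit_one.neg (α := ℝ[X]))
  rw [intervalInequalities]
  split_ifs
  · fin_cases i
    · exact separable_X_sub_C
    · exact hneg
  · exact separable_one

theorem pairwise_isCoprime_intervalInequalities (a b : ℝ) :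
    Pairwise fun i i' => IsCoprime (intervalInequalities a b i) (intervalInequalities a b i') := by
  intro i i' hi
  rw [intervalInequalities]
  split_ifs with hab
  · have H : IsCoprime (X - C a) (C b - X) := by
      rw [← neg_sub X (C b)]
      exact (pairwise_coprime_X_sub_C Function.injective_id hab.ne).neg_right
    fin_cases i <;> fin_cases i'
    · exact absurd rfl hi
    · exact H
    · exact H.symm
    · exact absurd rfl hi
  · exact isCoprime_one_left

theorem solutionSet_interval_eq_Icc {a b : ℝ} (hab : a ≤ b) :
    {t : ℝ | (∀ i, 0 ≤ (intervalInequalities a b i).eval t) ∧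
      ∀ k, (intervalEquation a b k).eval t = 0} = Set.Icc a b := by
  ext t
  rcases hab.lt_or_eq with hab | rfl
  · simp [intervalInequalities, intervalEquation, hab]
  · simp [intervalInequalities, intervalEquation, sub_eq_zero]

theorem memTrunc_interval_X_sub_C (a b : ℝ) {k : ℕ} (hk : 1 ≤ k) :
    MemTrunc k (intervalInequalities a b) (intervalEquation a b) (X - C a) := by
  have hdeg : (X - C a : ℝ[X]).degree ≤ (2 * k : ℕ) := by
    rw [degree_X_sub_C]
    exact_mod_cast (by lia : 1 ≤ 2 * k)
  by_cases hab : a < b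
  · have h0 : intervalInequalities a b 0 = X - C a := by simp [intervalInequalities, hab]
    exact h0 ▸ memTrunc_inequality 0 (h0 ▸ hdeg)
  · have h0 : intervalEquation a b 0 = X - C a := by simp [intervalEquation, hab]
    exact h0 ▸ memTrunc_equation 0 (h0 ▸ hdeg)

end IntervalDescription

/-- For a polynomial `f` on `ℝⁿ` and a semi-algebraic set `S ⊆ ℝⁿ`
with `f(S)` nonempty and bounded, and `f⋆ = inf f(S)`, there are finite families
`p⁽ʲ⁾, q⁽ʲ⁾` of univariate polynomials (each `p_{i,j}` squarefree, pairwise without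
common complex roots) such that `⋃_j S(p⁽ʲ⁾, q⁽ʲ⁾)` is the closure of `f(S)` and for
some `K ∈ ℕ` and every `k ≥ K`, `f⋆ = min_j ρ_k(g, p⁽ʲ⁾, q⁽ʲ⁾)` where `g(t) = t` and
`ρ_k(g, p, q) = sup {λ ∈ ℝ : g - λ ∈ T_k(p, q)}`. -/
theorem sos_strengthenings_attain_infimum
    (n N : ℕ) (f : MvPolynomial (Fin n) ℝ)
    (mP lQ : Fin N → ℕ)
    (P : (u : Fin N) → Fin (mP u) → MvPolynomial (Fin n) ℝ)
    (Qp : (u : Fin N) → Fin (lQ u) → MvPolynomial (Fin n) ℝ)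
    (S : Set (Fin n → ℝ))
    (hS : S = ⋃ u, {x | (∀ i, 0 < MvPolynomial.eval x (P u i)) ∧
        ∀ k, MvPolynomial.eval x (Qp u k) = 0})
    (hne : ((fun x => MvPolynomial.eval x f) '' S).Nonempty)
    (hbd : Bornology.IsBounded ((fun x => MvPolynomial.eval x f) '' S))
    (fstar : ℝ) (hfstar : fstar = sInf ((fun x => MvPolynomial.eval x f) '' S)) :
    ∃ (w : ℕ) (v kk : Fin w → ℕ)
      (p : (j : Fin w) → Fin (v j) → Polynomial ℝ)
      (q : (j : Fin w) → Fin (kk j) → Polynomial ℝ),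
      (∀ j i, HasOnlySimpleComplexRoots (p j i)) ∧
      (∀ j, ∀ i i', i ≠ i' → ¬ HasCommonComplexRoot (p j i) (p j i')) ∧
      ((⋃ j, {t : ℝ | (∀ i, 0 ≤ (p j i).eval t) ∧ ∀ k, (q j k).eval t = 0})
        = closure ((fun x => MvPolynomial.eval x f) '' S)) ∧
      ∃ K : ℕ, ∀ k ≥ K,
        IsLeast (Set.range (fun j : Fin w =>
          sSup {lam : ℝ |
            MemTrunc k (p j) (q j) (Polynomial.X - Polynomial.C lam)})) fstar := by
  have hT : IsDeterminedBySigns S _ := hS ▸ isDeterminedBySigns_iUnion_basic P Qp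
  obtain ⟨F, hF, hsat⟩ := hT.exists_isSaturatedOff_image
    ((Set.finite_iUnion fun u => Set.finite_range (P u)).union
      (Set.finite_iUnion fun u => Set.finite_range (Qp u))) f
  obtain ⟨w, a, b, hab, hcl⟩ := hsat.exists_closure_eq_iUnion_Icc hF hbd
  have hset (j : Fin w) := solutionSet_interval_eq_Icc (hab j)
  refine ⟨w, fun _ => 2, fun _ => 1, fun j => intervalInequalities (a j) (b j),
    fun j => intervalEquation (a j) (b j),
    fun j i => hasOnlySimpleComplexRoots_of_separable (separable_intervalInequalities _ _ i),
    fun j i i' hi => not_hasCommonComplexRoot_of_isCoprime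
      (pairwise_isCoprime_intervalInequalities _ _ hi),
    by rw [hcl, Set.iUnion_congr hset], 1, fun k hk => ?_⟩
  have hsup (j : Fin w) : sSup {lam : ℝ | MemTrunc k (intervalInequalities (a j) (b j))
      (intervalEquation (a j) (b j)) (X - C lam)} = a j := by
    obtain ⟨hp, hq⟩ := (hset j).superset (Set.left_mem_Icc.2 (hab j))
    exact sSup_memTrunc_X_sub_C_eq (memTrunc_interval_X_sub_C _ _ hk) hp hq
  simpa only [hsup, hfstar] using
    isLeast_range_sInf_of_closure_eq_iUnion_Icc hne hbd.bddBelow hab hcl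
end
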